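/- Let n be a positive integer, let ω be the standard symplectic form on ℝ^{2n}, let L ⊆ ℝ^{2n} be the span of the first n standard basis vectors, and let P be the Siegel parabolic subgroup of Sp_{2n}(ℝ). Let W and W' be n-dimensional subspaces of ℝ^{2n}. Then there exists h ∈ P whose associated linear map carries W onto W' if and only if the following three equalities of dimensions hold: finrank(L ⊓ W ⊓ W^⊥) = finrank(L ⊓ W' ⊓ W'^⊥), finrank(W ⊓ W^⊥) = finrank(W' ⊓ W'^⊥), and finrank(L ⊓ W) = finrank(L ⊓ W'). -/

import Mathlib

open Matrix

/-- The standard symplectic matrix `J = fromBlocks 0 I_n (-I_n) 0` on `ℝ^{2n}`,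
with `ℝ^{2n}` realized as `Fin n ⊕ Fin n → ℝ`. -/
def Jmat (n : ℕ) : Matrix (Fin n ⊕ Fin n) (Fin n ⊕ Fin n) ℝ :=
  Matrix.fromBlocks 0 1 (-1) 0

/-- The standard symplectic form `ω(u,v) = uᵀ J v` on `ℝ^{2n}`. -/
def omegaForm (n : ℕ) (u v : Fin n ⊕ Fin n → ℝ) : ℝ :=
  u ⬝ᵥ (Jmat n) *ᵥ v

/-- The ω-orthogonal complement `W^⊥ = {v | ∀ w ∈ W, ω(v,w) = 0}` of a subspace `W`. -/
def sympPerp (n : ℕ) (W : Submodule ℝ (Fin n ⊕ Fin n → ℝ)) :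
    Submodule ℝ (Fin n ⊕ Fin n → ℝ) where
  carrier := {v | ∀ w ∈ W, omegaForm n v w = 0}
  zero_mem' := fun w _ => by simp [omegaForm]
  add_mem' := fun {a b} ha hb w hw => by
    have h1 := ha w hw
    have h2 := hb w hw
    simp only [omegaForm, add_dotProduct] at *
    rw [h1, h2, add_zero]
  smul_mem' := fun c a ha w hw => by
    have h1 := ha w hw
    simp only [omegaForm, smul_dotProduct, smul_eq_mul] at *
    rw [h1, mul_zero]

/-- `L`: the span of the first `n` standard basis vectors of `ℝ^{2n}`. -/
def Lsub (n : ℕ) : Submodule ℝ (Fin n ⊕ Fin n → ℝ) :=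
  Submodule.span ℝ (Set.range fun i : Fin n => Pi.single (Sum.inl i) (1 : ℝ))

set_option linter.unusedSectionVars false

namespace SiegelAux

open Module

section basic

variable {V : Type} [AddCommGroup V] [Module ℝ V] [FiniteDimensional ℝ V]

/-- symplectic: alternating and nondegenerate -/
structure Symp (B : LinearMap.BilinForm ℝ V) : Prop where
  alt : ∀ x, B x x = 0
  nd : ∀ x, (∀ y, B x y = 0) → x = 0

lemma Symp.neg {B : LinearMap.BilinForm ℝ V} (h : Symp B) (x y : V) : B x y = - B y x := by
  have := h.alt (x + y)
  simp only [map_add, LinearMap.add_apply, h.alt] at this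
  linarith

lemma Symp.nondeg {B : LinearMap.BilinForm ℝ V} (h : Symp B) : B.Nondegenerate := by
  refine ⟨h.nd, fun y hy => h.nd y fun x => ?_⟩
  rw [h.neg, hy x, neg_zero]

lemma Symp.refl {B : LinearMap.BilinForm ℝ V} (h : Symp B) : B.IsRefl := by
  intro x y hxy
  rw [h.neg, hxy, neg_zero]

/-- rescaling to get a hyperbolic pair -/
lemma Symp.scale {B : LinearMap.BilinForm ℝ V} (X : Submodule ℝ V) {e : V}
    (h : ∃ y ∈ X, B e y ≠ 0) : ∃ f ∈ X, B e f = 1 := by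
  obtain ⟨y, hy, hne⟩ := h
  refine ⟨(B e y)⁻¹ • y, X.smul_mem _ hy, ?_⟩
  simp [hne]

/-- the orthogonal of the hyperbolic plane -/
def hperp (B : LinearMap.BilinForm ℝ V) (e f : V) : Submodule ℝ V :=
  LinearMap.ker (B.flip f) ⊓ LinearMap.ker (B e)

lemma mem_hperp {B : LinearMap.BilinForm ℝ V} {e f x : V} :
    x ∈ hperp B e f ↔ B x f = 0 ∧ B e x = 0 := by
  simp [hperp]

/-- projection on the orthogonal of the hyperbolic plane -/
def hproj (B : LinearMap.BilinForm ℝ V) (h : Symp B) (e f : V) (hef : B e f = 1) :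
    V →ₗ[ℝ] hperp B e f :=
  LinearMap.codRestrict _
    (LinearMap.id - (B.flip f).smulRight e - (B e).smulRight f) (fun x => by
      rw [mem_hperp]
      simp [h.alt, hef])

lemma hproj_coe {B : LinearMap.BilinForm ℝ V} (h : Symp B) {e f : V} (hef : B e f = 1) (x : V) :
    (hproj B h e f hef x : V) = x - B x f • e - B e x • f := by
  simp [hproj]

lemma decomp {B : LinearMap.BilinForm ℝ V} (h : Symp B) {e f : V} (hef : B e f = 1) (x : V) :
    x = B x f • e + B e x • f + (hproj B h e f hef x : V) := by
  rw [hproj_coe]; abel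

lemma B_right {B : LinearMap.BilinForm ℝ V} (h : Symp B) {e f : V} (hef : B e f = 1)
    {m : V} (hm : m ∈ hperp B e f) (x : V) : B m x = B m (hproj B h e f hef x) := by
  rw [mem_hperp] at hm
  conv_lhs => rw [decomp h hef x]
  have : B m e = 0 := by rw [h.neg, hm.2, neg_zero]
  simp [hm.1, this]

lemma symp_hperp {B : LinearMap.BilinForm ℝ V} (h : Symp B) {e f : V} (hef : B e f = 1) :
    Symp (B.restrict (hperp B e f)) := by
  refine ⟨fun x => by simp [h.alt], fun x hx => ?_⟩
  have : (x : V) = 0 := h.nd _ fun y => by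
    rw [B_right h hef x.2]
    simpa using hx (hproj B h e f hef y)
  exact Subtype.ext this

lemma hperp_lt {B : LinearMap.BilinForm ℝ V} {e f : V} (hef : B e f = 1) :
    finrank ℝ (hperp B e f) < finrank ℝ V := by
  apply Submodule.finrank_lt
  intro ht
  have : f ∈ hperp B e f := by rw [ht]; trivial
  rw [mem_hperp, hef] at this
  exact one_ne_zero this.2

/-- compatibility of a subspace with a hyperbolic pair -/
def Compat (B : LinearMap.BilinForm ℝ V) (e f : V) (X : Submodule ℝ V) : Prop :=
  ∀ x ∈ X, B x f • e ∈ X ∧ B e x • f ∈ X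

lemma Compat.inf {B : LinearMap.BilinForm ℝ V} {e f : V} {X Y : Submodule ℝ V}
    (hX : Compat B e f X) (hY : Compat B e f Y) : Compat B e f (X ⊓ Y) :=
  fun x hx => ⟨⟨(hX x hx.1).1, (hY x hx.2).1⟩, ⟨(hX x hx.1).2, (hY x hx.2).2⟩⟩

lemma Compat.orth {B : LinearMap.BilinForm ℝ V} (h : Symp B) {e f : V} {X : Submodule ℝ V}
    (hX : Compat B e f X) : Compat B e f (B.orthogonal X) := by
  intro x hx
  rw [LinearMap.BilinForm.mem_orthogonal_iff] at hx
  simp only [LinearMap.BilinForm.mem_orthogonal_iff]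
  refine ⟨fun w hw => ?_, fun w hw => ?_⟩
  · have := hx _ (hX w hw).2
    simp only [map_smul, LinearMap.smul_apply, smul_eq_mul] at this ⊢
    rw [h.neg x f, h.neg w e]; linarith
  · have := hx _ (hX w hw).1
    simp only [map_smul, LinearMap.smul_apply, smul_eq_mul] at this ⊢
    linarith

lemma Compat.proj {B : LinearMap.BilinForm ℝ V} (h : Symp B) {e f : V} (hef : B e f = 1)
    {X : Submodule ℝ V} (hX : Compat B e f X) {x : V} (hx : x ∈ X) :
    (hproj B h e f hef x : V) ∈ X := by
  rw [hproj_coe]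
  exact X.sub_mem (X.sub_mem hx (hX x hx).1) (hX x hx).2

lemma Compat.e_orth {B : LinearMap.BilinForm ℝ V} (h : Symp B) {e f : V} (hef : B e f = 1)
    {X : Submodule ℝ V} (hX : Compat B e f X) : e ∈ B.orthogonal X ↔ f ∉ X := by
  rw [LinearMap.BilinForm.mem_orthogonal_iff]
  constructor
  · intro he hf
    have := he f hf
    rw [h.neg, hef] at this
    norm_num at this
  · intro hf w hw
    by_contra hne
    apply hf
    have h2 : B e w ≠ 0 := by rw [h.neg]; simpa using hne
    exact (X.smul_mem_iff h2).1 (hX w hw).2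

lemma Compat.f_orth {B : LinearMap.BilinForm ℝ V} {e f : V} (hef : B e f = 1)
    {X : Submodule ℝ V} (hX : Compat B e f X) : f ∈ B.orthogonal X ↔ e ∉ X := by
  rw [LinearMap.BilinForm.mem_orthogonal_iff]
  constructor
  · intro hf he
    have := hf e he
    rw [hef] at this
    norm_num at this
  · intro he w hw
    by_contra hne
    exact he ((X.smul_mem_iff hne).1 (hX w hw).1)

lemma finrank_step (φ : V →ₗ[ℝ] ℝ) (v : V) (hv : φ v = 1) (X : Submodule ℝ V)
    (hX : ∀ x ∈ X, φ x • v ∈ X) [Decidable (v ∈ X)] :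
    finrank ℝ X = finrank ℝ ↥(X ⊓ LinearMap.ker φ) + if v ∈ X then 1 else 0 := by
  split_ifs with hvX
  · have h1 := LinearMap.finrank_range_add_finrank_ker (φ.domRestrict X)
    have h2 : LinearMap.range (φ.domRestrict X) = ⊤ := by
      rw [LinearMap.range_eq_top]
      intro c
      exact ⟨c • ⟨v, hvX⟩, by simp [hv]⟩
    have h3 : finrank ℝ (LinearMap.ker (φ.domRestrict X)) = finrank ℝ ↥(X ⊓ LinearMap.ker φ) := by
      rw [← Submodule.finrank_map_subtype_eq, ← Submodule.map_comap_subtype]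
      congr 1
    rw [h2, finrank_top, h3, finrank_self] at h1
    omega
  · have : X ⊓ LinearMap.ker φ = X := by
      apply inf_eq_left.2
      intro x hx
      by_contra hne
      exact hvX ((X.smul_mem_iff hne).1 (hX x hx))
    rw [this, add_zero]

open Classical in
lemma Compat.finrank_eq {B : LinearMap.BilinForm ℝ V} (h : Symp B) {e f : V} (hef : B e f = 1)
    {X : Submodule ℝ V} (hX : Compat B e f X) :
    finrank ℝ X = finrank ℝ (X.comap (hperp B e f).subtype)
      + (if f ∈ X then 1 else 0) + if e ∈ X then 1 else 0 := by
  have h1 := finrank_step (B.flip f) e (by simpa using hef) X (fun x hx => (hX x hx).1)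
  have h2 := finrank_step (B e) f hef (X ⊓ LinearMap.ker (B.flip f)) (fun x hx => by
    refine ⟨(hX x hx.1).2, ?_⟩
    simp [h.alt])
  have h3 : f ∈ X ⊓ LinearMap.ker (B.flip f) ↔ f ∈ X := by
    simp [h.alt]
  rw [h1, h2]
  simp only [h3]
  rw [← Submodule.finrank_map_subtype_eq, Submodule.map_comap_subtype, hperp, inf_assoc, inf_comm X]

lemma lag_hperp {B : LinearMap.BilinForm ℝ V} (h : Symp B) {e f : V} (hef : B e f = 1)
    {X : Submodule ℝ V} (hX : Compat B e f X) :
    (B.restrict (hperp B e f)).orthogonal (X.comap (hperp B e f).subtype) =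
      (B.orthogonal X).comap (hperp B e f).subtype := by
  ext m
  simp only [LinearMap.BilinForm.mem_orthogonal_iff, Submodule.mem_comap, Submodule.subtype_apply]
  constructor
  · intro hm w hw
    rw [h.neg, B_right h hef m.2, ← h.neg]
    exact hm _ (hX.proj h hef hw)
  · intro hm w hw
    exact hm _ hw

end basic

section two

variable {V V' : Type} [AddCommGroup V] [Module ℝ V] [FiniteDimensional ℝ V]
  [AddCommGroup V'] [Module ℝ V'] [FiniteDimensional ℝ V']

lemma glue {B : LinearMap.BilinForm ℝ V} {B' : LinearMap.BilinForm ℝ V'} (h : Symp B)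
    (h' : Symp B') {e f : V} {e' f' : V'} (hef : B e f = 1) (hef' : B' e' f' = 1)
    (g : hperp B e f →ₗ[ℝ] hperp B' e' f')
    (hg : ∀ x y, B' (g x) (g y) = B x y) :
    ∃ G : V →ₗ[ℝ] V', (∀ x y, B' (G x) (G y) = B x y) ∧
      ∀ x, G x = B x f • e' + B e x • f' + g (hproj B h e f hef x) := by
  refine ⟨(B.flip f).smulRight e' + (B e).smulRight f' +
    (hperp B' e' f').subtype ∘ₗ g ∘ₗ hproj B h e f hef, ?_, fun x => by simp⟩
  intro x y
  have key : ∀ m : hperp B e f, B' e' (g m) = 0 ∧ B' f' (g m) = 0 ∧ B' (g m) e' = 0 ∧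
      B' (g m) f' = 0 := by
    intro m
    have := mem_hperp.1 (g m).2
    refine ⟨this.2, ?_, ?_, this.1⟩
    · rw [h'.neg, this.1, neg_zero]
    · rw [h'.neg, this.2, neg_zero]
  have key2 : ∀ m : hperp B e f, B e m = 0 ∧ B f m = 0 ∧ B m e = 0 ∧ B m f = 0 := by
    intro m
    have := mem_hperp.1 m.2
    refine ⟨this.2, ?_, ?_, this.1⟩
    · rw [h.neg, this.1, neg_zero]
    · rw [h.neg, this.2, neg_zero]
  have hfe : B f e = -1 := by rw [h.neg, hef]
  have hfe' : B' f' e' = -1 := by rw [h'.neg, hef']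
  have hx := decomp h hef x
  have hy := decomp h hef y
  have : B x y = B x f * B e y - B e x * B y f
      + B (hproj B h e f hef x) (hproj B h e f hef y) := by
    conv_lhs => rw [hx, hy]
    simp only [map_add, map_smul, LinearMap.add_apply, LinearMap.smul_apply, smul_eq_mul, h.alt,
      hef, hfe, (key2 _).1, (key2 _).2.1, (key2 _).2.2.1, (key2 _).2.2.2]
    ring
  rw [this]
  simp only [map_add, map_smul, LinearMap.add_apply, LinearMap.smul_apply, smul_eq_mul, h'.alt,
      hef', hfe', (key _).1, (key _).2.1, (key _).2.2.1, (key _).2.2.2, LinearMap.smulRight_apply,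
      LinearMap.comp_apply, Submodule.subtype_apply, hg, LinearMap.BilinForm.flip_apply]
  ring

lemma glue_map {B : LinearMap.BilinForm ℝ V} {B' : LinearMap.BilinForm ℝ V'} (h : Symp B)
    {e f : V} {e' f' : V'} (hef : B e f = 1)
    (g : hperp B e f →ₗ[ℝ] hperp B' e' f') (G : V →ₗ[ℝ] V')
    (hG : ∀ x, G x = B x f • e' + B e x • f' + g (hproj B h e f hef x))
    {X : Submodule ℝ V} {X' : Submodule ℝ V'} (hX : Compat B e f X)
    (he : e ∈ X → e' ∈ X') (hf : f ∈ X → f' ∈ X')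
    (hg : ∀ m ∈ X.comap (hperp B e f).subtype, g m ∈ X'.comap (hperp B' e' f').subtype) :
    ∀ x ∈ X, G x ∈ X' := by
  intro x hx
  rw [hG]
  refine X'.add_mem (X'.add_mem ?_ ?_) (hg _ (hX.proj h hef hx))
  · by_cases h0 : B x f = 0
    · simp [h0]
    · exact X'.smul_mem _ (he ((X.smul_mem_iff h0).1 (hX x hx).1))
  · by_cases h0 : B e x = 0
    · simp [h0]
    · exact X'.smul_mem _ (hf ((X.smul_mem_iff h0).1 (hX x hx).2))

lemma finrank_transfer {B : LinearMap.BilinForm ℝ V} {B' : LinearMap.BilinForm ℝ V'} (h : Symp B)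
    (h' : Symp B') {e f : V} {e' f' : V'} (hef : B e f = 1) (hef' : B' e' f' = 1)
    {X : Submodule ℝ V} {X' : Submodule ℝ V'} (hX : Compat B e f X) (hX' : Compat B' e' f' X')
    (he : e ∈ X ↔ e' ∈ X') (hf : f ∈ X ↔ f' ∈ X') (hr : finrank ℝ X = finrank ℝ X') :
    finrank ℝ (X.comap (hperp B e f).subtype) = finrank ℝ (X'.comap (hperp B' e' f').subtype) := by
  classical
  have h1 := hX.finrank_eq h hef
  have h2 := hX'.finrank_eq h' hef'
  simp only [he, hf] at h1
  omega

lemma finrank_hperp {B : LinearMap.BilinForm ℝ V} {B' : LinearMap.BilinForm ℝ V'} (h : Symp B)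
    (h' : Symp B') {e f : V} {e' f' : V'} (hef : B e f = 1) (hef' : B' e' f' = 1)
    (hr : finrank ℝ V = finrank ℝ V') :
    finrank ℝ (hperp B e f) = finrank ℝ (hperp B' e' f') := by
  have := finrank_transfer h h' hef hef' (X := ⊤) (X' := ⊤) (fun x _ => ⟨trivial, trivial⟩)
    (fun x _ => ⟨trivial, trivial⟩) (by simp) (by simp) (by simpa using hr)
  rwa [Submodule.comap_top, Submodule.comap_top, finrank_top, finrank_top] at this

end two

lemma exists_pair {V : Type} [AddCommGroup V] [Module ℝ V] [FiniteDimensional ℝ V]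
    {B : LinearMap.BilinForm ℝ V}
    (h : Symp B) {e : V} (he : e ≠ 0) : ∃ f, B e f = 1 := by
  obtain ⟨f, -, hf⟩ := Symp.scale (B := B) ⊤ (e := e) (by
    by_contra hc
    push Not at hc
    exact he (h.nd e fun y => hc y trivial))
  exact ⟨f, hf⟩

theorem symp_iso (k : ℕ) : ∀ (V V' : Type) [AddCommGroup V] [Module ℝ V] [FiniteDimensional ℝ V]
    [AddCommGroup V'] [Module ℝ V'] [FiniteDimensional ℝ V']
    (B : LinearMap.BilinForm ℝ V) (B' : LinearMap.BilinForm ℝ V'), Symp B → Symp B' →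
    finrank ℝ V = k → finrank ℝ V' = k →
    ∃ G : V →ₗ[ℝ] V', ∀ x y, B' (G x) (G y) = B x y := by
  induction k using Nat.strong_induction_on with
  | _ k ih =>
  intro V V' _ _ _ _ _ _ B B' h h' hk hk'
  rcases Nat.eq_zero_or_pos k with h0 | hpos
  · have : Subsingleton V := finrank_zero_iff.1 (hk.trans h0)
    exact ⟨0, fun x y => by simp [Subsingleton.elim x 0]⟩
  · have : Nontrivial V := finrank_pos_iff.1 (hk ▸ hpos)
    have : Nontrivial V' := finrank_pos_iff.1 (hk' ▸ hpos)
    obtain ⟨e, he⟩ := exists_ne (0 : V)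
    obtain ⟨e', he'⟩ := exists_ne (0 : V')
    obtain ⟨f, hef⟩ := exists_pair h he
    obtain ⟨f', hef'⟩ := exists_pair h' he'
    obtain ⟨g, hg⟩ := ih (finrank ℝ (hperp B e f)) (hk ▸ hperp_lt hef) _ _ _ _
      (symp_hperp h hef) (symp_hperp h' hef') rfl
      (finrank_hperp h' h hef' hef (hk'.trans hk.symm))
    obtain ⟨G, hG, -⟩ := glue h h' hef hef' g hg
    exact ⟨G, hG⟩

/-- the conclusion: an isometry respecting the two pairs of subspaces -/
def Concl {V V' : Type} [AddCommGroup V] [Module ℝ V] [AddCommGroup V'] [Module ℝ V']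
    (B : LinearMap.BilinForm ℝ V) (B' : LinearMap.BilinForm ℝ V')
    (L W : Submodule ℝ V) (L' W' : Submodule ℝ V') : Prop :=
  ∃ G : V →ₗ[ℝ] V', (∀ x y, B' (G x) (G y) = B x y) ∧ (∀ x ∈ L, G x ∈ L') ∧ ∀ x ∈ W, G x ∈ W'

def Claim (k : ℕ) : Prop :=
  ∀ (V V' : Type) [AddCommGroup V] [Module ℝ V] [FiniteDimensional ℝ V]
    [AddCommGroup V'] [Module ℝ V'] [FiniteDimensional ℝ V']
    (B : LinearMap.BilinForm ℝ V) (B' : LinearMap.BilinForm ℝ V')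
    (L W : Submodule ℝ V) (L' W' : Submodule ℝ V'), Symp B → Symp B' →
    finrank ℝ V = k → finrank ℝ V' = k →
    B.orthogonal L = L → B'.orthogonal L' = L' →
    finrank ℝ W = finrank ℝ W' →
    finrank ℝ ↥(W ⊓ B.orthogonal W) = finrank ℝ ↥(W' ⊓ B'.orthogonal W') →
    finrank ℝ ↥(L ⊓ W) = finrank ℝ ↥(L' ⊓ W') →
    finrank ℝ ↥(L ⊓ (W ⊓ B.orthogonal W)) = finrank ℝ ↥(L' ⊓ (W' ⊓ B'.orthogonal W')) →
    Concl B B' L W L' W'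

section steps

variable {V V' : Type} [AddCommGroup V] [Module ℝ V] [FiniteDimensional ℝ V]
  [AddCommGroup V'] [Module ℝ V'] [FiniteDimensional ℝ V']

lemma compat_lag {B : LinearMap.BilinForm ℝ V} {e f : V} {L : Submodule ℝ V}
    (hL : B.orthogonal L = L) (he : e ∈ L) : Compat B e f L := by
  intro x hx
  have : B e x = 0 := by
    rw [← hL, LinearMap.BilinForm.mem_orthogonal_iff] at hx
    exact hx e he
  exact ⟨L.smul_mem _ he, by simp [this]⟩

lemma f_not_mem_lag {B : LinearMap.BilinForm ℝ V} {e f : V} (hef : B e f = 1) {L : Submodule ℝ V}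
    (hL : B.orthogonal L = L) (he : e ∈ L) : f ∉ L := by
  intro hf
  rw [← hL, LinearMap.BilinForm.mem_orthogonal_iff] at hf
  have := hf e he
  rw [hef] at this
  exact one_ne_zero this

lemma step {B : LinearMap.BilinForm ℝ V} {B' : LinearMap.BilinForm ℝ V'} (h : Symp B)
    (h' : Symp B') {e f : V} {e' f' : V'} (hef : B e f = 1) (hef' : B' e' f' = 1)
    {L W : Submodule ℝ V} {L' W' : Submodule ℝ V'}
    (ih : ∀ j < finrank ℝ V, Claim j) (hV : finrank ℝ V = finrank ℝ V')
    (hL : B.orthogonal L = L) (hL' : B'.orthogonal L' = L')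
    (h1 : finrank ℝ W = finrank ℝ W')
    (h2 : finrank ℝ ↥(W ⊓ B.orthogonal W) = finrank ℝ ↥(W' ⊓ B'.orthogonal W'))
    (h3 : finrank ℝ ↥(L ⊓ W) = finrank ℝ ↥(L' ⊓ W'))
    (h4 : finrank ℝ ↥(L ⊓ (W ⊓ B.orthogonal W)) = finrank ℝ ↥(L' ⊓ (W' ⊓ B'.orthogonal W')))
    (he : e ∈ L) (he' : e' ∈ L') (cW : Compat B e f W) (cW' : Compat B' e' f' W')
    (heW : e ∈ W ↔ e' ∈ W') (hfW : f ∈ W ↔ f' ∈ W') : Concl B B' L W L' W' := by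
  have cL := compat_lag (f := f) hL he
  have cL' := compat_lag (f := f') hL' he'
  have nf := f_not_mem_lag hef hL he
  have nf' := f_not_mem_lag hef' hL' he'
  have cR := cW.inf (cW.orth h)
  have cR' := cW'.inf (cW'.orth h')
  have eR : e ∈ W ⊓ B.orthogonal W ↔ e' ∈ W' ⊓ B'.orthogonal W' := by
    simp only [Submodule.mem_inf, cW.e_orth h hef, cW'.e_orth h' hef', heW, hfW]
  have fR : f ∈ W ⊓ B.orthogonal W ↔ f' ∈ W' ⊓ B'.orthogonal W' := by
    simp only [Submodule.mem_inf, cW.f_orth hef, cW'.f_orth hef', heW, hfW]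
  obtain ⟨g, hg, gL, gW⟩ := ih _ (hperp_lt hef) (hperp B e f) (hperp B' e' f')
    (B.restrict _) (B'.restrict _)
    (L.comap (hperp B e f).subtype) (W.comap (hperp B e f).subtype)
    (L'.comap (hperp B' e' f').subtype) (W'.comap (hperp B' e' f').subtype)
    (symp_hperp h hef) (symp_hperp h' hef') rfl (finrank_hperp h' h hef' hef hV.symm)
    (by rw [lag_hperp h hef cL, hL]) (by rw [lag_hperp h' hef' cL', hL'])
    (finrank_transfer h h' hef hef' cW cW' heW hfW h1)
    (by
      rw [lag_hperp h hef cW, lag_hperp h' hef' cW', ← Submodule.comap_inf, ← Submodule.comap_inf]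
      exact finrank_transfer h h' hef hef' cR cR' eR fR h2)
    (by
      rw [← Submodule.comap_inf, ← Submodule.comap_inf]
      exact finrank_transfer h h' hef hef' (cL.inf cW) (cL'.inf cW')
        (by simp [he, he', heW]) (by simp [nf, nf']) h3)
    (by
      rw [lag_hperp h hef cW, lag_hperp h' hef' cW', ← Submodule.comap_inf, ← Submodule.comap_inf,
        ← Submodule.comap_inf, ← Submodule.comap_inf]
      refine finrank_transfer h h' hef hef' (cL.inf cR) (cL'.inf cR') ?_ ?_ h4
      · exact and_congr (by simp [he, he']) eR
      · exact and_congr (by simp [nf, nf']) fR)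
  obtain ⟨G, hG, hG2⟩ := glue h h' hef hef' g hg
  exact ⟨G, hG, glue_map h hef g G hG2 cL (fun _ => he') (fun hf => absurd hf nf) gL,
    glue_map h hef g G hG2 cW heW.1 hfW.1 gW⟩

/-- case 1 -/
lemma pair1 {B : LinearMap.BilinForm ℝ V} (h : Symp B) {L W : Submodule ℝ V}
    (hne : L ⊓ (W ⊓ B.orthogonal W) ≠ ⊥) :
    ∃ e f, B e f = 1 ∧ e ∈ L ∧ Compat B e f W ∧ e ∈ W ∧ f ∉ W := by
  obtain ⟨e, ⟨heL, heW, heO⟩, he⟩ := Submodule.exists_mem_ne_zero_of_ne_bot hne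
  obtain ⟨f, hf⟩ := exists_pair h he
  rw [SetLike.mem_coe, LinearMap.BilinForm.mem_orthogonal_iff] at heO
  have h0 : ∀ w ∈ W, B e w = 0 := fun w hw => by rw [h.neg, heO w hw, neg_zero]
  refine ⟨e, f, hf, heL, fun w hw => ⟨W.smul_mem _ heW, by simp [h0 w hw]⟩, heW, fun hfW => ?_⟩
  rw [h0 f hfW] at hf
  exact zero_ne_one hf

/-- case 2 -/
lemma pair2 {B : LinearMap.BilinForm ℝ V} (h : Symp B) {L W : Submodule ℝ V}
    (hL : B.orthogonal L = L)
    (hz : L ⊓ (W ⊓ B.orthogonal W) = ⊥) (hne : W ⊓ B.orthogonal W ≠ ⊥) :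
    ∃ e f, B e f = 1 ∧ e ∈ L ∧ Compat B e f W ∧ e ∉ W ∧ f ∈ W := by
  obtain ⟨f, hfR, hf⟩ := Submodule.exists_mem_ne_zero_of_ne_bot hne
  have hfL : f ∉ L := fun hfL => hf (by
    rw [← Submodule.mem_bot ℝ, ← hz]; exact ⟨hfL, hfR⟩)
  obtain ⟨e, he, hef⟩ : ∃ e ∈ L, B f e = 1 := by
    apply Symp.scale
    by_contra hc
    push Not at hc
    apply hfL
    rw [← hL, LinearMap.BilinForm.mem_orthogonal_iff]
    intro y hy
    rw [h.neg, hc y hy, neg_zero]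
  have hO := LinearMap.BilinForm.mem_orthogonal_iff.1 hfR.2
  have hef2 : B (-e) f = 1 := by rw [h.neg]; simp [hef]
  refine ⟨-e, f, hef2, L.neg_mem he, fun w hw => ⟨by simp [hO w hw], W.smul_mem _ hfR.1⟩,
    fun heW => ?_, hfR.1⟩
  rw [hO _ heW] at hef2
  exact zero_ne_one hef2

/-- cases 3 and 4 -/
lemma pair3 {B : LinearMap.BilinForm ℝ V} (h : Symp B) {L W : Submodule ℝ V}
    (hR : W ⊓ B.orthogonal W = ⊥) (hne : L ⊓ W ≠ ⊥) :
    ∃ e f, B e f = 1 ∧ e ∈ L ∧ e ∈ W ∧ f ∈ W := by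
  obtain ⟨e, ⟨heL, heW⟩, he⟩ := Submodule.exists_mem_ne_zero_of_ne_bot hne
  obtain ⟨f, hfW, hef⟩ : ∃ f ∈ W, B e f = 1 := by
    apply Symp.scale
    by_contra hc
    push Not at hc
    apply he
    rw [← Submodule.mem_bot ℝ, ← hR]
    refine ⟨heW, ?_⟩
    rw [SetLike.mem_coe, LinearMap.BilinForm.mem_orthogonal_iff]
    intro y hy
    rw [h.neg, hc y hy, neg_zero]
  exact ⟨e, f, hef, heL, heW, hfW⟩

lemma pair4 {B : LinearMap.BilinForm ℝ V} (h : Symp B) {L W : Submodule ℝ V}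
    (hR : W ⊓ B.orthogonal W = ⊥) (hne : L ⊓ B.orthogonal W ≠ ⊥) :
    ∃ e f, B e f = 1 ∧ e ∈ L ∧ Compat B e f W ∧ e ∉ W ∧ f ∉ W := by
  obtain ⟨e, f, hef, heL, heO, hfO⟩ := pair3 h (W := B.orthogonal W)
    (by rw [LinearMap.BilinForm.orthogonal_orthogonal h.nondeg h.refl, inf_comm, hR]) hne
  have h1 := LinearMap.BilinForm.mem_orthogonal_iff.1 heO
  have h2 := LinearMap.BilinForm.mem_orthogonal_iff.1 hfO
  refine ⟨e, f, hef, heL, fun w hw => ?_, fun he => ?_, fun hf => ?_⟩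
  · have h3 : B e w = 0 := by rw [h.neg, h1 w hw, neg_zero]
    simp [h2 w hw, h3]
  · rw [h2 e he] at hef; exact zero_ne_one hef
  · rw [h.neg, h1 f hf] at hef; norm_num at hef

lemma finrank_orth {B : LinearMap.BilinForm ℝ V} (h : Symp B) (W : Submodule ℝ V) :
    finrank ℝ (B.orthogonal W) + finrank ℝ W = finrank ℝ V := by
  have := LinearMap.BilinForm.finrank_orthogonal h.nondeg W
  have := Submodule.finrank_le W
  omega

lemma finrank_L_orth {B : LinearMap.BilinForm ℝ V} (h : Symp B) {L : Submodule ℝ V}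
    (hL : B.orthogonal L = L) (W : Submodule ℝ V) :
    finrank ℝ ↥(L ⊓ B.orthogonal W) + finrank ℝ W = finrank ℝ L + finrank ℝ ↥(L ⊓ W) := by
  have e1 : L ⊓ B.orthogonal W = B.orthogonal (L ⊔ W) := by
    ext x
    conv_lhs => rw [← hL]
    simp only [Submodule.mem_inf, LinearMap.BilinForm.mem_orthogonal_iff]
    constructor
    · rintro ⟨ha, hb⟩ y hy
      obtain ⟨a, haL, b, hbW, rfl⟩ := Submodule.mem_sup.1 hy
      simp [ha a haL, hb b hbW]
    · intro hx
      exact ⟨fun y hy => hx y (Submodule.mem_sup_left hy),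
        fun y hy => hx y (Submodule.mem_sup_right hy)⟩
  have e2 := finrank_orth h (L ⊔ W)
  have e3 := finrank_orth h L
  have e4 := Submodule.finrank_sup_add_finrank_inf_eq L W
  rw [hL] at e3
  rw [e1]
  omega

lemma symp_restrict {B : LinearMap.BilinForm ℝ V} (h : Symp B) {W : Submodule ℝ V}
    (hR : W ⊓ B.orthogonal W = ⊥) : Symp (B.restrict W) := by
  refine ⟨fun x => by simp [h.alt], fun x hx => ?_⟩
  apply Subtype.ext
  rw [Submodule.coe_zero, ← Submodule.mem_bot ℝ, ← hR]
  refine ⟨x.2, ?_⟩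
  rw [SetLike.mem_coe, LinearMap.BilinForm.mem_orthogonal_iff]
  intro y hy
  rw [h.neg]
  simpa using hx ⟨y, hy⟩

/-- case 5 -/
lemma case5 {B : LinearMap.BilinForm ℝ V} {B' : LinearMap.BilinForm ℝ V'} (h : Symp B)
    (h' : Symp B') {L W : Submodule ℝ V} {L' W' : Submodule ℝ V'}
    (hV : finrank ℝ V = finrank ℝ V')
    (hL : B.orthogonal L = L) (hL' : B'.orthogonal L' = L')
    (h1 : finrank ℝ W = finrank ℝ W')
    (hR : W ⊓ B.orthogonal W = ⊥) (hR' : W' ⊓ B'.orthogonal W' = ⊥)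
    (hLW : L ⊓ W = ⊥) (hLO : L ⊓ B.orthogonal W = ⊥) (hLO' : L' ⊓ B'.orthogonal W' = ⊥) :
    Concl B B' L W L' W' := by
  obtain ⟨g, hg⟩ := symp_iso _ W W' _ _ (symp_restrict h hR) (symp_restrict h' hR') rfl h1.symm
  have hg2 : ∀ x y : W, B' (g x) (g y) = B x y := hg
  have d1 := finrank_L_orth h hL W
  have d2 := finrank_orth h L
  have d2' := finrank_orth h' L'
  rw [hL] at d2
  rw [hL'] at d2'
  rw [hLW, hLO, finrank_bot] at d1
  have hc : IsCompl L W := by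
    rw [Submodule.isCompl_iff_disjoint _ _ (by omega), disjoint_iff, hLW]
  let T : L' →ₗ[ℝ] Module.Dual ℝ W := (B'.domRestrict₁₂ L' W').compr₂ LinearMap.id |>.compl₂ g
  have hT : ∀ l w, T l w = B' l (g w) := fun l w => rfl
  -- `g` is surjective
  have hginj : Function.Injective g := by
    rw [injective_iff_map_eq_zero]
    intro x hx
    apply (symp_restrict h hR).nd
    intro y
    rw [← hg, hx]; simp
  have hgs : Function.Surjective g :=
    (LinearMap.injective_iff_surjective_of_finrank_eq_finrank h1).1 hginj
  have hTinj : Function.Injective T := by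
    rw [injective_iff_map_eq_zero]
    intro l hl
    apply Subtype.ext
    rw [Submodule.coe_zero, ← Submodule.mem_bot ℝ, ← hLO']
    refine ⟨l.2, ?_⟩
    rw [SetLike.mem_coe, LinearMap.BilinForm.mem_orthogonal_iff]
    intro y hy
    obtain ⟨w, hw⟩ := hgs ⟨y, hy⟩
    have := hT l w
    rw [hl, hw, LinearMap.zero_apply] at this
    rw [h'.neg, ← this, neg_zero]
  have hTs : Function.Surjective T :=
    (LinearMap.injective_iff_surjective_of_finrank_eq_finrank (by
      rw [Subspace.dual_finrank_eq]; omega)).1 hTinj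
  obtain ⟨S, hS⟩ := LinearMap.exists_rightInverse_of_surjective T (LinearMap.range_eq_top.2 hTs)
  let σ : L →ₗ[ℝ] L' := S ∘ₗ (B.domRestrict₁₂ L W)
  have hσ : ∀ (l : L) (w : W), B' (σ l) (g w) = B l w := by
    intro l w
    rw [← hT]
    have := LinearMap.congr_fun hS (B.domRestrict₁₂ L W l)
    simp only [LinearMap.comp_apply, LinearMap.id_apply] at this
    simp only [σ, LinearMap.comp_apply, this]
    rfl
  let G := LinearMap.ofIsCompl hc (L'.subtype ∘ₗ σ) (W'.subtype ∘ₗ g)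
  have GonL : ∀ l : L, G l = σ l := fun l => by
    simp [G]
  have GonW : ∀ w : W, G w = g w := fun w => by
    simp [G]
  have iso : ∀ x y : L, B x y = 0 := fun x y =>
    LinearMap.BilinForm.mem_orthogonal_iff.1 (hL.ge y.2) x x.2
  have iso' : ∀ x y : L', B' x y = 0 := fun x y =>
    LinearMap.BilinForm.mem_orthogonal_iff.1 (hL'.ge y.2) x x.2
  refine ⟨G, ?_, fun x hx => ?_, fun x hx => ?_⟩
  · intro x y
    have hx : x ∈ L ⊔ W := by rw [hc.sup_eq_top]; trivial
    have hy : y ∈ L ⊔ W := by rw [hc.sup_eq_top]; trivial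
    obtain ⟨a, ha, b, hb, rfl⟩ := Submodule.mem_sup.1 hx
    obtain ⟨c, hc, d, hd, rfl⟩ := Submodule.mem_sup.1 hy
    have q1 := GonL ⟨a, ha⟩
    have q2 := GonL ⟨c, hc⟩
    have q3 := GonW ⟨b, hb⟩
    have q4 := GonW ⟨d, hd⟩
    have q5 := hσ ⟨a, ha⟩ ⟨d, hd⟩
    have q6 := hσ ⟨c, hc⟩ ⟨b, hb⟩
    have q7 := hg2 ⟨b, hb⟩ ⟨d, hd⟩
    have q8 := iso ⟨a, ha⟩ ⟨c, hc⟩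
    have q9 := iso' (σ ⟨a, ha⟩) (σ ⟨c, hc⟩)
    rw [h'.neg, h.neg] at q6
    simp only at q1 q2 q3 q4 q5 q6 q7 q8
    simp only [map_add, LinearMap.add_apply, q1, q2, q3, q4, q5, q7, q8, q9]
    linarith
  · rw [GonL ⟨x, hx⟩]; exact (σ ⟨x, hx⟩).2
  · rw [GonW ⟨x, hx⟩]; exact (g ⟨x, hx⟩).2

lemma ne_bot_of_finrank {X : Submodule ℝ V} {X' : Submodule ℝ V'}
    (hr : finrank ℝ X = finrank ℝ X') : X = ⊥ ↔ X' = ⊥ := by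
  rw [← Submodule.finrank_eq_zero, hr, Submodule.finrank_eq_zero]

end steps

theorem claim (k : ℕ) : Claim k := by
  induction k using Nat.strong_induction_on with
  | _ k ih =>
  intro V V' _ _ _ _ _ _ B B' L W L' W' h h' hk hk' hL hL' h1 h2 h3 h4
  subst hk
  have b4 := ne_bot_of_finrank h4
  have b2 := ne_bot_of_finrank h2
  have b3 := ne_bot_of_finrank h3
  have h5 : finrank ℝ ↥(L ⊓ B.orthogonal W) = finrank ℝ ↥(L' ⊓ B'.orthogonal W') := by
    have e1 := finrank_L_orth h hL W
    have e1' := finrank_L_orth h' hL' W'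
    have e2 := finrank_orth h L
    have e2' := finrank_orth h' L'
    rw [hL] at e2
    rw [hL'] at e2'
    omega
  have b5 := ne_bot_of_finrank h5
  by_cases c4 : L ⊓ (W ⊓ B.orthogonal W) = ⊥
  swap
  · obtain ⟨e, f, hef, he, cW, heW, hfW⟩ := pair1 h c4
    obtain ⟨e', f', hef', he', cW', heW', hfW'⟩ := pair1 h' (mt b4.2 c4)
    exact step h h' hef hef' ih hk'.symm hL hL' h1 h2 h3 h4 he he' cW cW'
      (by simp [heW, heW']) (by simp [hfW, hfW'])
  by_cases c2 : W ⊓ B.orthogonal W = ⊥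
  swap
  · obtain ⟨e, f, hef, he, cW, heW, hfW⟩ := pair2 h hL c4 c2
    obtain ⟨e', f', hef', he', cW', heW', hfW'⟩ := pair2 h' hL' (b4.1 c4) (mt b2.2 c2)
    exact step h h' hef hef' ih hk'.symm hL hL' h1 h2 h3 h4 he he' cW cW'
      (by simp [heW, heW']) (by simp [hfW, hfW'])
  by_cases c3 : L ⊓ W = ⊥
  swap
  · obtain ⟨e, f, hef, he, heW, hfW⟩ := pair3 h c2 c3
    obtain ⟨e', f', hef', he', heW', hfW'⟩ := pair3 h' (b2.1 c2) (mt b3.2 c3)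
    exact step h h' hef hef' ih hk'.symm hL hL' h1 h2 h3 h4 he he'
      (fun w _ => ⟨W.smul_mem _ heW, W.smul_mem _ hfW⟩)
      (fun w _ => ⟨W'.smul_mem _ heW', W'.smul_mem _ hfW'⟩)
      (by simp [heW, heW']) (by simp [hfW, hfW'])
  by_cases c5 : L ⊓ B.orthogonal W = ⊥
  swap
  · obtain ⟨e, f, hef, he, cW, heW, hfW⟩ := pair4 h c2 c5
    obtain ⟨e', f', hef', he', cW', heW', hfW'⟩ := pair4 h' (b2.1 c2) (mt b5.2 c5)
    exact step h h' hef hef' ih hk'.symm hL hL' h1 h2 h3 h4 he he' cW cW'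
      (by simp [heW, heW']) (by simp [hfW, hfW'])
  exact case5 h h' hk'.symm hL hL' h1 c2 (b2.1 c2) c3 c5 (b5.1 c5)

/-- the standard form -/
noncomputable def BJ (n : ℕ) : LinearMap.BilinForm ℝ (Fin n ⊕ Fin n → ℝ) := Matrix.toBilin' (Jmat n)

lemma BJ_apply (n : ℕ) (u v) : BJ n u v = omegaForm n u v := by
  simp [BJ, omegaForm, Matrix.toBilin'_apply']

lemma BJ_sum (n : ℕ) (u v : Fin n ⊕ Fin n → ℝ) :
    BJ n u v = ∑ i, (u (Sum.inl i) * v (Sum.inr i) - u (Sum.inr i) * v (Sum.inl i)) := by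
  rw [BJ_apply, omegaForm, Jmat, Matrix.fromBlocks_mulVec]
  simp [dotProduct, Fintype.sum_sum_type, Finset.sum_add_distrib, Matrix.neg_mulVec, sub_eq_add_neg]

lemma BJ_symp (n : ℕ) : Symp (BJ n) := by
  refine ⟨fun x => ?_, fun x hx => ?_⟩
  · rw [BJ_sum]
    exact Finset.sum_eq_zero fun i _ => by ring
  · ext i
    rcases i with i | i
    · have := hx (Pi.single (Sum.inr i) 1)
      simpa [BJ_sum, Pi.single_apply] using this
    · have := hx (Pi.single (Sum.inl i) 1)
      simpa [BJ_sum, Pi.single_apply] using this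

lemma mem_Lsub (n : ℕ) (x : Fin n ⊕ Fin n → ℝ) : x ∈ Lsub n ↔ ∀ i, x (Sum.inr i) = 0 := by
  constructor
  · intro hx i
    induction hx using Submodule.span_induction with
    | mem x hx => obtain ⟨j, rfl⟩ := hx; simp
    | zero => rfl
    | add x y _ _ hx hy => simp [hx, hy]
    | smul a x _ hx => simp [hx]
  · intro hx
    have : x = ∑ i, x (Sum.inl i) • (Pi.single (Sum.inl i) (1 : ℝ) : Fin n ⊕ Fin n → ℝ) := by
      ext j
      rcases j with j | j
      · simp [Finset.sum_apply, Pi.single_apply]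
      · simp [Finset.sum_apply, hx]
    rw [this]
    exact Submodule.sum_mem _ fun i _ => Submodule.smul_mem _ _ (Submodule.subset_span ⟨i, rfl⟩)

lemma Lsub_lag (n : ℕ) : (BJ n).orthogonal (Lsub n) = Lsub n := by
  ext x
  rw [LinearMap.BilinForm.mem_orthogonal_iff, mem_Lsub]
  constructor
  · intro hx i
    have := hx (Pi.single (Sum.inl i) 1) (Submodule.subset_span ⟨i, rfl⟩)
    simpa [BJ_sum, Pi.single_apply] using this
  · intro hx y hy
    rw [mem_Lsub] at hy
    simp [BJ_sum, hx, hy]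

lemma sympPerp_eq (n : ℕ) (W) : sympPerp n W = (BJ n).orthogonal W := by
  ext x
  rw [LinearMap.BilinForm.mem_orthogonal_iff]
  change (∀ w ∈ W, omegaForm n x w = 0) ↔ _
  refine forall₂_congr fun w _ => ?_
  rw [← BJ_apply, (BJ_symp n).neg, neg_eq_zero]

lemma isometry_iff (n : ℕ) (h : Matrix (Fin n ⊕ Fin n) (Fin n ⊕ Fin n) ℝ) :
    hᵀ * Jmat n * h = Jmat n ↔ ∀ x y, BJ n (h.mulVecLin x) (h.mulVecLin y) = BJ n x y := by
  have key : ∀ x y, BJ n (h.mulVecLin x) (h.mulVecLin y)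
      = Matrix.toBilin' (hᵀ * Jmat n * h) x y := by
    intro x y
    rw [BJ, Matrix.toBilin'_apply', Matrix.toBilin'_apply']
    simp only [Matrix.mulVecLin_apply, ← Matrix.mulVec_mulVec]
    rw [Matrix.dotProduct_mulVec x, Matrix.vecMul_transpose]
  constructor
  · intro hh x y
    rw [key, hh, BJ]
  · intro hh
    apply Matrix.toBilin'.injective
    refine LinearMap.ext₂ fun x y => ?_
    rw [← key, hh, BJ]

lemma block_iff (n : ℕ) (h : Matrix (Fin n ⊕ Fin n) (Fin n ⊕ Fin n) ℝ) :
    h.toBlocks₂₁ = 0 ↔ ∀ x ∈ Lsub n, h.mulVecLin x ∈ Lsub n := by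
  constructor
  · intro hh x hx
    rw [mem_Lsub] at hx ⊢
    intro i
    have : ∀ j, h (Sum.inr i) (Sum.inl j) = 0 := fun j => congrFun (congrFun hh i) j
    simp [Matrix.mulVec, dotProduct, this, hx]
  · intro hh
    ext i j
    have := hh (Pi.single (Sum.inl j) 1) (Submodule.subset_span ⟨j, rfl⟩)
    rw [mem_Lsub] at this
    simpa [Matrix.toBlocks₂₁] using this i

end SiegelAux

open SiegelAux in
theorem siegel_parabolic_orbits_on_grassmannian (n : ℕ) (hn : 0 < n)
    (W W' : Submodule ℝ (Fin n ⊕ Fin n → ℝ))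
    (hW : Module.finrank ℝ W = n) (hW' : Module.finrank ℝ W' = n) :
    (∃ h : Matrix (Fin n ⊕ Fin n) (Fin n ⊕ Fin n) ℝ,
        hᵀ * Jmat n * h = Jmat n ∧ h.toBlocks₂₁ = 0 ∧
          W.map h.mulVecLin = W') ↔
      (Module.finrank ℝ ↥(Lsub n ⊓ W ⊓ sympPerp n W) =
          Module.finrank ℝ ↥(Lsub n ⊓ W' ⊓ sympPerp n W') ∧
        Module.finrank ℝ ↥(W ⊓ sympPerp n W) =
          Module.finrank ℝ ↥(W' ⊓ sympPerp n W') ∧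
        Module.finrank ℝ ↥(Lsub n ⊓ W) = Module.finrank ℝ ↥(Lsub n ⊓ W')) := by
  have inj : ∀ G : (Fin n ⊕ Fin n → ℝ) →ₗ[ℝ] (Fin n ⊕ Fin n → ℝ),
      (∀ x y, BJ n (G x) (G y) = BJ n x y) → Function.Injective G := by
    intro G hG
    rw [injective_iff_map_eq_zero]
    intro x hx
    apply (BJ_symp n).nd
    intro y
    rw [← hG, hx]; simp
  rw [sympPerp_eq, sympPerp_eq]
  constructor
  · rintro ⟨h, h1, h2, rfl⟩
    rw [isometry_iff] at h1
    rw [block_iff] at h2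
    have hi := inj _ h1
    have hs : Function.Surjective h.mulVecLin := LinearMap.injective_iff_surjective.1 hi
    have fr : ∀ X : Submodule ℝ (Fin n ⊕ Fin n → ℝ),
        Module.finrank ℝ (X.map h.mulVecLin) = Module.finrank ℝ X := fun X =>
      (Submodule.equivMapOfInjective _ hi X).finrank_eq.symm
    have hL : (Lsub n).map h.mulVecLin = Lsub n :=
      Submodule.eq_of_le_of_finrank_eq (Submodule.map_le_iff_le_comap.2 h2) (fr _)
    have hO : (BJ n).orthogonal (W.map h.mulVecLin) = ((BJ n).orthogonal W).map h.mulVecLin := by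
      ext x
      obtain ⟨x, rfl⟩ := hs x
      rw [Submodule.mem_map]
      simp only [hi.eq_iff, exists_eq_right, LinearMap.BilinForm.mem_orthogonal_iff,
        Submodule.mem_map, forall_exists_index, and_imp, forall_apply_eq_imp_iff₂, h1]
    have e1 := Submodule.map_inf h.mulVecLin (p := Lsub n) (q := W) hi
    have e2 := Submodule.map_inf h.mulVecLin (p := W) (q := (BJ n).orthogonal W) hi
    have e3 := Submodule.map_inf h.mulVecLin (p := Lsub n ⊓ W) (q := (BJ n).orthogonal W) hi
    rw [hL] at e1
    rw [e1, ← hO] at e3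
    rw [← hO] at e2
    rw [← e3, ← e2, ← e1]
    exact ⟨(fr _).symm, (fr _).symm, (fr _).symm⟩
  · rintro ⟨h1, h2, h3⟩
    rw [inf_assoc, inf_assoc] at h1
    obtain ⟨G, hG, GonL, GonW⟩ := claim _ _ _ (BJ n) (BJ n) (Lsub n) W (Lsub n) W' (BJ_symp n)
      (BJ_symp n) rfl rfl (Lsub_lag n) (Lsub_lag n) (hW.trans hW'.symm) h2 h3 h1
    have hm : (LinearMap.toMatrix' G).mulVecLin = G := by
      rw [← Matrix.toLin'_apply', Matrix.toLin'_toMatrix']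
    refine ⟨LinearMap.toMatrix' G, ?_, ?_, ?_⟩
    · rw [isometry_iff, hm]; exact hG
    · rw [block_iff, hm]; exact GonL
    · rw [hm]
      refine Submodule.eq_of_le_of_finrank_eq (Submodule.map_le_iff_le_comap.2 GonW) ?_
      rw [← (Submodule.equivMapOfInjective _ (inj G hG) W).finrank_eq, hW, hW']
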